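/- arXiv:2303.13061 — 4 statements merged into one kernel-verified Lean document; each statement's English description precedes it below -/
import Mathlib

section
/- Let P ⊂ ℝ^d be a (0,1)-polytope whose lattice point set is partitioned as P ∩ ℤ^d = W ⊔ Z with W and Z nonempty, and suppose that every facet F of P satisfies W ⊆ F or Z ⊆ F. Then the toric ring of P decomposes as a tensor product: 𝕜[P] ≅ 𝕜[conv(W)] ⊗_𝕜 𝕜[conv(Z)] as 𝕜-algebras; equivalently, the toric ideal I_P equals the sum of the extensions to 𝕜[x_v : v ∈ P ∩ ℤ^d] of the toric ideals I_{conv(W)} ⊆ 𝕜[x_w : w ∈ W] and I_{conv(Z)} ⊆ 𝕜[x_z : z ∈ Z]. -/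
/-!
STATEMENT 11: if the lattice point set of a (0,1)-polytope `P` is partitioned
as `W ⊔ Z` (both nonempty) and every facet of `P` contains `W` or contains `Z`,
then `𝕜[P] ≅ 𝕜[conv W] ⊗_𝕜 𝕜[conv Z]`; equivalently the toric ideal `I_P` is
the sum of the extensions of `I_{conv W}` and `I_{conv Z}`.
-/

open scoped NNReal TensorProduct

noncomputable section

def intCast {α : Type*} (v : α → ℤ) : α → ℝ := fun i => (v i : ℝ)

def latticeA {α : Type*} (L : Set (α → ℤ)) : Set ((α → ℤ) × ℤ) :=
  (fun v => (v, (1 : ℤ))) '' L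

/-- The toric ring `𝕜[P]` of an integral polytope with lattice point set `L`. -/
abbrev toricRing (𝕜 : Type*) [Field 𝕜] {α : Type*} (L : Set (α → ℤ)) : Type _ :=
  AddMonoidAlgebra 𝕜 (AddSubmonoid.closure (latticeA L))

/-- The lattice points of a subset of `ℝ^α`, as integer vectors. -/
def latticePts {α : Type*} (P : Set (α → ℝ)) : Set (α → ℤ) :=
  {v | intCast v ∈ P}

/-- A facet of `P`: a nonempty exposed face of dimension `dim P − 1`. -/
def IsFacet {α : Type*} [Fintype α] (P F : Set (α → ℝ)) : Prop :=
  IsExposed ℝ P F ∧ F.Nonempty ∧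
    Module.finrank ℝ (affineSpan ℝ F).direction + 1 =
      Module.finrank ℝ (affineSpan ℝ P).direction

/-- The toric ideal of the integral polytope with lattice point set `L`:
the kernel of `𝕜[x_v : v ∈ L] → 𝕜[t₀, t₁^{±1}, …, t_d^{±1}]`, `x_v ↦ t^v t₀`. -/
def toricIdealOf (𝕜 : Type*) [Field 𝕜] {d : ℕ} (L : Set (Fin d → ℤ)) :
    Ideal (MvPolynomial L 𝕜) :=
  RingHom.ker (MvPolynomial.aeval
    (fun v : L => AddMonoidAlgebra.single ((v : Fin d → ℤ), (1 : ℤ)) (1 : 𝕜)) :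
      MvPolynomial L 𝕜 →ₐ[𝕜] AddMonoidAlgebra 𝕜 ((Fin d → ℤ) × ℤ))

/-
Let `C` be the cone over `P × {1}`. The linear forms that define the facets of `C` have no common
zero in the span of `C` except `0`: among the forms that are nonnegative on `C` and nonzero at a
given point, one with the most zeros among the vertices defines a facet. By hypothesis every such
form vanishes on `W × {1}` or on `Z × {1}`, so the spans of these two sets meet only in `0`. Hence
an element of the monoid generated by `(W ∪ Z) × {1}` is a sum of a `W`-part and a `Z`-part in
exactly one way. This makes the monoid a product, and it splits every binomial of `I_P` into
binomials of `I_{conv W}` and `I_{conv Z}`.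
-/

section FacetForms

variable {𝕜 E : Type*} [Field 𝕜] [LinearOrder 𝕜] [IsStrictOrderedRing 𝕜]
  [AddCommGroup E] [Module 𝕜 E]

/-- A linear form defining a facet of the cone over `V`: it is nonnegative on `V`, and its zeros in
`V` together with one further point of `V` span everything. -/
def IsFacetForm (V : Set E) (l : E →ₗ[𝕜] 𝕜) : Prop :=
  (∀ v ∈ V, 0 ≤ l v) ∧
    ∃ v₀ ∈ V, l v₀ ≠ 0 ∧ V ⊆ Submodule.span 𝕜 (insert v₀ {v ∈ V | l v = 0})

lemma exists_pos_nonneg_add_mul_and_eq_zero {α : Type*} {V : Set α} (hV : V.Finite) {f g : α → 𝕜}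
    (hf : ∀ v ∈ V, 0 ≤ f v) (hfg : ∀ v ∈ V, f v = 0 → 0 ≤ g v) (hg : ∃ v ∈ V, g v < 0) :
    ∃ t > 0, (∀ v ∈ V, 0 ≤ f v + t * g v) ∧ ∃ v ∈ V, f v ≠ 0 ∧ f v + t * g v = 0 := by
  obtain ⟨v, ⟨hv, hgv⟩, hmin⟩ : ∃ v, MinimalFor (· ∈ {v ∈ V | g v < 0}) (fun v ↦ f v / -g v) v :=
    (hV.subset (Set.sep_subset V _)).exists_minimalFor _ _ hg
  have hfv : f v ≠ 0 := fun h ↦ (hfg v hv h).not_gt hgv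
  have hfv_pos : 0 < f v := (hf v hv).lt_of_ne' hfv
  have ht : 0 < f v / -g v := div_pos hfv_pos (neg_pos.2 hgv)
  refine ⟨f v / -g v, ht, fun w hw ↦ ?_, v, hv, hfv, by field [hgv.ne]⟩
  rcases lt_or_ge (g w) 0 with hgw | hgw
  · have hvw : f v / -g v ≤ f w / -g w := le_of_not_gt fun h ↦ h.not_ge (hmin ⟨hw, hgw⟩ h.le)
    rw [le_div_iff₀ (neg_pos.2 hgw)] at hvw
    linarith
  · exact add_nonneg (hf w hw) (mul_nonneg ht.le hgw)

/-- Among the linear forms that are nonnegative on `V` and do not vanish at `u`, the form `l` has a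
maximal set of zeros in `V`. Such forms exist when `V` is finite, and they are facet forms. -/
def HasMaximalZeros (V : Set E) (u : E) : (E →ₗ[𝕜] 𝕜) → Prop :=
  MaximalFor (fun l ↦ (∀ v ∈ V, 0 ≤ l v) ∧ l u ≠ 0) (fun l ↦ {v ∈ V | l v = 0})

namespace HasMaximalZeros

variable {V : Set E} {u : E} {l m : E →ₗ[𝕜] 𝕜}

omit [IsStrictOrderedRing 𝕜] in
lemma apply_eq_zero_of_more_zeros (hl : HasMaximalZeros V u l) (hm : ∀ v ∈ V, 0 ≤ m v)
    (hlm : ∀ v ∈ V, l v = 0 → m v = 0) (hne : ∃ v ∈ V, l v ≠ 0 ∧ m v = 0) : m u = 0 := by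
  by_contra hmu
  obtain ⟨v, hv, hlv, hmv⟩ := hne
  exact hlv (hl.2 ⟨hm, hmu⟩ (fun w hw ↦ ⟨hw.1, hlm w hw.1 hw.2⟩) ⟨hv, hmv⟩).2

/-- Otherwise moving from `l` along `m` reaches a nonnegative form with more zeros than `l`; the
sign condition keeps its value at `u` away from zero. -/
lemma nonneg_of_mul_apply_nonneg (hl : HasMaximalZeros V u l) (hV : V.Finite)
    (hlm : ∀ v ∈ V, l v = 0 → m v = 0) (hsign : 0 ≤ l u * m u) : ∀ v ∈ V, 0 ≤ m v := by
  by_contra! hneg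
  obtain ⟨t, ht, hnonneg, hzero⟩ := exists_pos_nonneg_add_mul_and_eq_zero hV hl.prop.1
    (fun v hv h ↦ (hlm v hv h).ge) hneg
  have htu : (l + t • m) u = 0 :=
    hl.apply_eq_zero_of_more_zeros hnonneg (fun v hv h ↦ by simp [h, hlm v hv h]) hzero
  have hlu_sq : l u * l u + t * (l u * m u) = 0 := by
    simpa [mul_add, mul_left_comm] using congrArg (l u * ·) htu
  linarith [mul_self_pos.2 hl.prop.2, mul_nonneg ht.le hsign]

lemma eq_zero_on_of_more_zeros (hl : HasMaximalZeros V u l) (hV : V.Finite)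
    (hlm : ∀ v ∈ V, l v = 0 → m v = 0) (hne : ∃ v ∈ V, l v ≠ 0 ∧ m v = 0) :
    ∀ v ∈ V, m v = 0 := by
  have hlm_neg : ∀ v ∈ V, l v = 0 → (-m) v = 0 := by simpa using hlm
  have hne_neg : ∃ v ∈ V, l v ≠ 0 ∧ (-m) v = 0 := by simpa using hne
  have hmu : m u = 0 := by
    rcases le_total 0 (l u * m u) with hsign | hsign
    · exact hl.apply_eq_zero_of_more_zeros (hl.nonneg_of_mul_apply_nonneg hV hlm hsign) hlm hne
    · exact neg_eq_zero.1 <| hl.apply_eq_zero_of_more_zeros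
        (hl.nonneg_of_mul_apply_nonneg hV hlm_neg (by simpa using hsign)) hlm_neg hne_neg
  refine fun v hv ↦ le_antisymm (neg_nonneg.1 ?_) ?_
  · exact hl.nonneg_of_mul_apply_nonneg hV hlm_neg (by simp [hmu]) v hv
  · exact hl.nonneg_of_mul_apply_nonneg hV hlm (by simp [hmu]) v hv

theorem isFacetForm (hl : HasMaximalZeros V u l) (hV : V.Finite)
    (hu : u ∈ Submodule.span 𝕜 V) : IsFacetForm V l := by
  obtain ⟨v₀, hv₀, hlv₀⟩ : ∃ v ∈ V, l v ≠ 0 := by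
    by_contra! h
    exact hl.prop.2 (Submodule.span_le (p := l.ker).2 h hu)
  refine ⟨hl.prop.1, v₀, hv₀, hlv₀, fun v hv ↦ ?_⟩
  by_contra hv_span
  obtain ⟨m, hmv, hm⟩ := Submodule.exists_le_ker_of_notMem hv_span
  rw [Submodule.span_le, Set.insert_subset_iff] at hm
  exact hmv (hl.eq_zero_on_of_more_zeros hV (fun w hw h ↦ hm.2 ⟨hw, h⟩) ⟨v₀, hv₀, hlv₀, hm.1⟩ v hv)

end HasMaximalZeros

lemma exists_nonneg_apply_ne_zero {V : Set E} (hV : V.Finite) {h : E →ₗ[𝕜] 𝕜}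
    (hh : ∀ v ∈ V, 0 < h v) {u : E} (hu : u ≠ 0) :
    ∃ l : E →ₗ[𝕜] 𝕜, (∀ v ∈ V, 0 ≤ l v) ∧ l u ≠ 0 := by
  by_cases hhu : h u = 0
  · obtain ⟨m, hm⟩ : ∃ m : Module.Dual 𝕜 E, m u ≠ 0 := by
      contrapose! hu
      exact (Module.forall_dual_apply_eq_zero_iff 𝕜 u).1 hu
    obtain ⟨t, ht⟩ : BddAbove ((fun v ↦ -m v / h v) '' V) := (hV.image _).bddAbove
    refine ⟨m + t • h, fun v hv ↦ ?_, by simpa [hhu] using hm⟩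
    have htv : -m v / h v ≤ t := ht (Set.mem_image_of_mem _ hv)
    rw [div_le_iff₀ (hh v hv)] at htv
    simpa using neg_le_iff_add_nonneg'.1 htv
  · exact ⟨h, fun v hv ↦ (hh v hv).le, hhu⟩

theorem eq_zero_of_forall_isFacetForm_apply_eq_zero {V : Set E} (hV : V.Finite) {h : E →ₗ[𝕜] 𝕜}
    (hh : ∀ v ∈ V, 0 < h v) {u : E} (hu : u ∈ Submodule.span 𝕜 V)
    (hfacet : ∀ l : E →ₗ[𝕜] 𝕜, IsFacetForm V l → l u = 0) : u = 0 := by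
  by_contra hu_ne
  have zeros_finite : ((fun l : E →ₗ[𝕜] 𝕜 ↦ {v ∈ V | l v = 0}) ''
      {l | (∀ v ∈ V, 0 ≤ l v) ∧ l u ≠ 0}).Finite :=
    hV.finite_subsets.subset (Set.image_subset_iff.2 fun l _ ↦ Set.sep_subset V _)
  obtain ⟨l, hl⟩ := Set.Finite.exists_maximalFor' _ _ zeros_finite
    (exists_nonneg_apply_ne_zero hV hh hu_ne)
  exact hl.prop.2 (hfacet l (HasMaximalZeros.isFacetForm hl hV hu))

theorem disjoint_span_of_forall_isFacetForm {S T : Set E} (hST : (S ∪ T).Finite) {h : E →ₗ[𝕜] 𝕜}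
    (hh : ∀ v ∈ S ∪ T, 0 < h v)
    (hfacet : ∀ l : E →ₗ[𝕜] 𝕜, IsFacetForm (S ∪ T) l →
      (∀ v ∈ S, l v = 0) ∨ ∀ v ∈ T, l v = 0) :
    Disjoint (Submodule.span 𝕜 S) (Submodule.span 𝕜 T) := by
  refine Submodule.disjoint_def.2 fun u huS huT ↦ ?_
  refine eq_zero_of_forall_isFacetForm_apply_eq_zero hST hh
    (Submodule.span_mono Set.subset_union_left huS) fun l hl ↦ ?_
  rcases hfacet l hl with hlS | hlT
  · exact Submodule.span_le (p := l.ker).2 hlS huS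
  · exact Submodule.span_le (p := l.ker).2 hlT huT

omit [IsStrictOrderedRing 𝕜] in
lemma IsFacetForm.finrank_span [FiniteDimensional 𝕜 E] {V : Set E} {l : E →ₗ[𝕜] 𝕜}
    (hl : IsFacetForm V l) :
    Module.finrank 𝕜 (Submodule.span 𝕜 {v ∈ V | l v = 0}) + 1 =
      Module.finrank 𝕜 (Submodule.span 𝕜 V) := by
  obtain ⟨-, v₀, hv₀, hlv₀, hspan⟩ := hl
  have hv₀_notMem : v₀ ∉ Submodule.span 𝕜 {v ∈ V | l v = 0} := fun h ↦
    hlv₀ (Submodule.span_le (p := l.ker).2 (fun v hv ↦ hv.2) h)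
  have hspan_eq : Submodule.span 𝕜 (insert v₀ {v ∈ V | l v = 0}) = Submodule.span 𝕜 V :=
    le_antisymm (Submodule.span_mono (Set.insert_subset hv₀ (Set.sep_subset V _)))
      (Submodule.span_le.2 hspan)
  rw [← hspan_eq, Submodule.span_insert, sup_comm,
    Submodule.finrank_sup_span_singleton hv₀_notMem]

end FacetForms

section Homogenization

lemma span_eq_vectorSpan_sup_span_singleton {k V : Type*} [Ring k] [AddCommGroup V] [Module k V]
    {s : Set V} {p : V} (hp : p ∈ s) :
    Submodule.span k s = vectorSpan k s ⊔ Submodule.span k {p} := by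
  refine le_antisymm (Submodule.span_le.2 fun x hx ↦ ?_) (sup_le ?_ (Submodule.span_mono ?_))
  · rw [← sub_add_cancel x p]
    exact Submodule.add_mem_sup (vsub_mem_vectorSpan k hx hp) (Submodule.mem_span_singleton_self p)
  · rw [vectorSpan_def, Submodule.span_le]
    rintro _ ⟨x, hx, y, hy, rfl⟩
    exact sub_mem (Submodule.subset_span hx) (Submodule.subset_span hy)
  · exact Set.singleton_subset_iff.2 hp

variable {k V : Type*} [Field k] [AddCommGroup V] [Module k V]

lemma finrank_span_eq_finrank_vectorSpan_add_one [FiniteDimensional k V] {s : Set V}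
    (hs : s.Nonempty) {h : V →ₗ[k] k} (hh : ∀ x ∈ s, h x = 1) :
    Module.finrank k (Submodule.span k s) = Module.finrank k (vectorSpan k s) + 1 := by
  obtain ⟨p, hp⟩ := hs
  have vectorSpan_le_ker : vectorSpan k s ≤ h.ker := by
    rw [vectorSpan_def, Submodule.span_le]
    rintro _ ⟨x, hx, y, hy, rfl⟩
    simp [hh x hx, hh y hy]
  have hp_notMem : p ∉ vectorSpan k s := fun hmem ↦
    one_ne_zero ((hh p hp).symm.trans (vectorSpan_le_ker hmem))
  rw [span_eq_vectorSpan_sup_span_singleton hp, Submodule.finrank_sup_span_singleton hp_notMem]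

variable (k V) in
/-- The embedding of `V` as the affine hyperplane at height `1` of `V × k`, so that the cone over a
polytope in `V` is a cone with apex `0`. -/
def homogenization : V →ᵃ[k] V × k :=
  (AffineMap.id k V).prod (AffineMap.const k V 1)

@[simp]
lemma homogenization_apply (x : V) : homogenization k V x = (x, 1) := rfl

lemma finrank_span_image_homogenization [FiniteDimensional k V] {s : Set V} (hs : s.Nonempty) :
    Module.finrank k (Submodule.span k (homogenization k V '' s)) =
      Module.finrank k (vectorSpan k s) + 1 := by
  have linear_injective : Function.Injective (homogenization k V).linear := fun x y h ↦
    congrArg Prod.fst h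
  rw [finrank_span_eq_finrank_vectorSpan_add_one (hs.image _) (h := LinearMap.snd k V k)
      (Set.forall_mem_image.2 fun _ _ ↦ rfl), ← AffineMap.map_vectorSpan,
    (Submodule.equivMapOfInjective _ linear_injective _).finrank_eq]

end Homogenization

section Facets

lemma isExposed_setOf_apply_eq {𝕜 E : Type*} [TopologicalSpace 𝕜] [Ring 𝕜] [PartialOrder 𝕜]
    [IsOrderedAddMonoid 𝕜] [IsTopologicalAddGroup 𝕜] [AddCommGroup E] [TopologicalSpace E]
    [Module 𝕜 E] {A : Set E} {l : StrongDual 𝕜 E} {c : 𝕜} (hl : ∀ x ∈ A, c ≤ l x) :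
    IsExposed 𝕜 A {x ∈ A | l x = c} := by
  rintro ⟨z, hz, rfl⟩
  refine ⟨-l, Set.ext fun x ↦ and_congr_right fun hx ↦ ?_⟩
  simp only [neg_apply, neg_le_neg_iff]
  exact ⟨fun h y hy ↦ h ▸ hl y hy, fun h ↦ (h z hz).antisymm (hl x hx)⟩

lemma eq_convexHull_inter_of_isExposed {E : Type*} [AddCommGroup E] [Module ℝ E]
    [TopologicalSpace E] [T2Space E] [IsTopologicalAddGroup E] [ContinuousSMul ℝ E]
    [LocallyConvexSpace ℝ E] {V F : Set E} (hV : V.Finite) (hF : IsExposed ℝ (convexHull ℝ V) F) :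
    F = convexHull ℝ (V ∩ F) := by
  have hF_convex : Convex ℝ F := hF.convex (convex_convexHull ℝ V)
  refine Set.Subset.antisymm ?_ (convexHull_min Set.inter_subset_right hF_convex)
  have extremePoints_subset : F.extremePoints ℝ ⊆ V ∩ F := fun x hx ↦
    ⟨extremePoints_convexHull_subset (hF.isExtreme.extremePoints_subset_extremePoints hx), hx.1⟩
  calc F = closure (convexHull ℝ (F.extremePoints ℝ)) :=
        (closure_convexHull_extremePoints (hF.isCompact (hV.isCompact_convexHull ℝ))
          hF_convex).symm
    _ ⊆ closure (convexHull ℝ (V ∩ F)) := closure_mono (convexHull_mono extremePoints_subset)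
    _ = convexHull ℝ (V ∩ F) := ((hV.inter_of_left F).isClosed_convexHull ℝ).closure_eq

lemma isExposed_setOf_homogenization_eq_zero {E : Type*} [AddCommGroup E] [Module ℝ E]
    [TopologicalSpace E] [T2Space E] [IsTopologicalAddGroup E] [ContinuousSMul ℝ E]
    [FiniteDimensional ℝ E] {V : Set E} {l : E × ℝ →ₗ[ℝ] ℝ}
    (hl : ∀ v ∈ V, 0 ≤ l (homogenization ℝ E v)) :
    IsExposed ℝ (convexHull ℝ V) {x ∈ convexHull ℝ V | l (homogenization ℝ E x) = 0} := by
  let L : StrongDual ℝ E := (l ∘ₗ LinearMap.inl ℝ E ℝ).toContinuousLinearMap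
  have hL (x : E) : l (homogenization ℝ E x) = L x + l (0, 1) := by
    simp [L, ← map_add]
  have hL_ge : ∀ x ∈ convexHull ℝ V, -l (0, 1) ≤ L x :=
    convexHull_min (fun v hv ↦ neg_le_iff_add_nonneg.2 ((hL v).symm ▸ hl v hv))
      (convex_halfSpace_ge L.isLinear _)
  simpa only [hL, add_eq_zero_iff_eq_neg] using isExposed_setOf_apply_eq hL_ge

namespace IsFacetForm

variable {k E : Type*} [Field k] [LinearOrder k] [AddCommGroup E] [Module k E]
  [FiniteDimensional k E] {V : Set E} {l : E × k →ₗ[k] k}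

lemma finrank_span_image_zeros (hl : IsFacetForm (homogenization k E '' V) l) (hV : V.Nonempty) :
    Module.finrank k
        (Submodule.span k (homogenization k E '' {v ∈ V | l (homogenization k E v) = 0})) =
      Module.finrank k (vectorSpan k V) := by
  have zeros_eq : {x ∈ homogenization k E '' V | l x = 0} =
      homogenization k E '' {v ∈ V | l (homogenization k E v) = 0} :=
    (Set.image_inter_preimage _ V {x | l x = 0}).symm
  rw [← Nat.add_right_cancel_iff (n := 1), ← zeros_eq, hl.finrank_span,
    finrank_span_image_homogenization hV]

lemma nonempty_zeros (hl : IsFacetForm (homogenization k E '' V) l) (hV : V.Nontrivial) :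
    {v ∈ V | l (homogenization k E v) = 0}.Nonempty := by
  by_contra! hempty
  have hrank := hl.finrank_span_image_zeros hV.nonempty
  rw [hempty, Set.image_empty, Submodule.span_empty, finrank_bot, eq_comm,
    Submodule.finrank_eq_zero, vectorSpan_eq_bot_iff_subsingleton] at hrank
  exact Set.not_subsingleton_iff.2 hV hrank

lemma finrank_vectorSpan (hl : IsFacetForm (homogenization k E '' V) l) (hV : V.Nontrivial) :
    Module.finrank k (vectorSpan k {v ∈ V | l (homogenization k E v) = 0}) + 1 =
      Module.finrank k (vectorSpan k V) := by
  rw [← finrank_span_image_homogenization (hl.nonempty_zeros hV),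
    hl.finrank_span_image_zeros hV.nonempty]

end IsFacetForm

variable {α : Type*} [Fintype α]

theorem isFacet_of_isFacetForm {V : Set (α → ℝ)} (hV : V.Finite) (hV_nontrivial : V.Nontrivial)
    {l : (α → ℝ) × ℝ →ₗ[ℝ] ℝ} (hl : IsFacetForm (homogenization ℝ (α → ℝ) '' V) l) :
    IsFacet (convexHull ℝ V) {x ∈ convexHull ℝ V | l (homogenization ℝ (α → ℝ) x) = 0} := by
  have hexposed := isExposed_setOf_homogenization_eq_zero fun v hv ↦
    hl.1 _ (Set.mem_image_of_mem _ hv)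
  have zeros_eq : V ∩ {x ∈ convexHull ℝ V | l (homogenization ℝ (α → ℝ) x) = 0} =
      {v ∈ V | l (homogenization ℝ (α → ℝ) v) = 0} :=
    Set.ext fun v ↦ ⟨fun hv ↦ ⟨hv.1, hv.2.2⟩, fun hv ↦ ⟨hv.1, subset_convexHull ℝ V hv.1, hv.2⟩⟩
  have hface := eq_convexHull_inter_of_isExposed hV hexposed
  rw [zeros_eq] at hface
  refine ⟨hexposed, ?_, ?_⟩
  · exact (hl.nonempty_zeros hV_nontrivial).mono fun v hv ↦ ⟨subset_convexHull ℝ V hv.1, hv.2⟩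
  · rw [hface, affineSpan_convexHull, affineSpan_convexHull, direction_affineSpan,
      direction_affineSpan, hl.finrank_vectorSpan hV_nontrivial]

theorem disjoint_span_homogenization {S T : Set (α → ℝ)} (hST : (S ∪ T).Finite)
    (hdisj : Disjoint S T)
    (hfacet : ∀ F, IsFacet (convexHull ℝ (S ∪ T)) F → S ⊆ F ∨ T ⊆ F) :
    Disjoint (Submodule.span ℝ (homogenization ℝ (α → ℝ) '' S))
      (Submodule.span ℝ (homogenization ℝ (α → ℝ) '' T)) := by
  rcases Set.subsingleton_or_nontrivial (S ∪ T) with hsub | hnontrivial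
  · obtain rfl | rfl : S = ∅ ∨ T = ∅ := by
      by_contra! hne
      obtain ⟨⟨s, hs⟩, t, ht⟩ := hne
      exact hdisj.ne_of_mem hs ht (hsub (.inl hs) (.inr ht))
    all_goals simp
  · refine disjoint_span_of_forall_isFacetForm (h := LinearMap.snd ℝ (α → ℝ) ℝ) ?_ ?_ fun l hl ↦ ?_
    · rw [← Set.image_union]
      exact hST.image _
    · rw [← Set.image_union]
      exact Set.forall_mem_image.2 fun _ _ ↦ one_pos
    · rw [← Set.image_union] at hl
      exact (hfacet _ (isFacet_of_isFacetForm hST hnontrivial hl)).imp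
        (fun hS ↦ Set.forall_mem_image.2 fun s hs ↦ (hS hs).2)
        (fun hT ↦ Set.forall_mem_image.2 fun t ht ↦ (hT ht).2)

end Facets

section AddClosures

variable {G : Type*} [AddCommGroup G] {S T : Set G}

lemma disjoint_addSubgroup_closure_of_disjoint_span {R E : Type*} [Ring R] [AddCommGroup E]
    [Module R E] {f : G →+ E} (hf : Function.Injective f)
    (h : Disjoint (Submodule.span R (f '' S)) (Submodule.span R (f '' T))) :
    Disjoint (AddSubgroup.closure S) (AddSubgroup.closure T) := by
  have closure_le (U : Set G) :
      AddSubgroup.closure U ≤ (Submodule.span R (f '' U)).toAddSubgroup.comap f :=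
    (AddSubgroup.closure_le _).2 fun u hu ↦ Submodule.subset_span (Set.mem_image_of_mem f hu)
  refine AddSubgroup.disjoint_def.2 fun {x} hxS hxT ↦ ?_
  have hfx : f x = 0 := Submodule.disjoint_def.1 h _ (closure_le S hxS) (closure_le T hxT)
  exact (map_eq_zero_iff f hf).1 hfx

lemma eq_and_eq_of_add_eq_add_of_disjoint_closure
    (h : Disjoint (AddSubgroup.closure S) (AddSubgroup.closure T)) {a a' b b' : G}
    (ha : a ∈ AddSubmonoid.closure S) (ha' : a' ∈ AddSubmonoid.closure S)
    (hb : b ∈ AddSubmonoid.closure T) (hb' : b' ∈ AddSubmonoid.closure T)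
    (hab : a + b = a' + b') : a = a' ∧ b = b' := by
  have hS := AddSubgroup.le_closure_toAddSubmonoid S
  have hT := AddSubgroup.le_closure_toAddSubmonoid T
  simpa using AddSubgroup.add_injective_of_disjoint h (a₁ := (⟨a, hS ha⟩, ⟨b, hT hb⟩))
    (a₂ := (⟨a', hS ha'⟩, ⟨b', hT hb'⟩)) hab

lemma bijective_coprod_inclusion_of_disjoint_closure
    (h : Disjoint (AddSubgroup.closure S) (AddSubgroup.closure T)) :
    Function.Bijective (AddMonoidHom.coprod
      (AddSubmonoid.inclusion (AddSubmonoid.closure_mono Set.subset_union_left))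
      (AddSubmonoid.inclusion (AddSubmonoid.closure_mono Set.subset_union_right)) :
        AddSubmonoid.closure S × AddSubmonoid.closure T →+ AddSubmonoid.closure (S ∪ T)) := by
  constructor
  · rintro ⟨a, b⟩ ⟨a', b'⟩ hab
    obtain ⟨ha, hb⟩ := eq_and_eq_of_add_eq_add_of_disjoint_closure h a.2 a'.2 b.2 b'.2
      (congrArg Subtype.val hab)
    exact Prod.ext (Subtype.ext ha) (Subtype.ext hb)
  · rintro ⟨x, hx⟩
    rw [AddSubmonoid.closure_union] at hx
    obtain ⟨a, ha, b, hb, rfl⟩ := AddSubmonoid.mem_sup.1 hx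
    exact ⟨(⟨a, ha⟩, ⟨b, hb⟩), rfl⟩

end AddClosures

section MonoidAlgebras

/-- The monoid algebra of a product of monoids is the tensor product of the monoid algebras. -/
def addMonoidAlgebraProdEquiv (R M N : Type*) [CommSemiring R] [AddCommMonoid M] [AddCommMonoid N] :
    AddMonoidAlgebra R (M × N) ≃ₐ[R] AddMonoidAlgebra R M ⊗[R] AddMonoidAlgebra R N :=
  (AddMonoidAlgebra.domCongr R R AddEquiv.prodComm).trans <|
    (AddMonoidAlgebra.curryAlgEquiv R).trans <|
      ((AddMonoidAlgebra.scalarTensorEquiv R (AddMonoidAlgebra R M) (M := N)).restrictScalars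
        R).symm

/-- The algebra of the monoid generated by `S ∪ T` splits as a tensor product when `S` and `T`
generate disjoint subgroups. -/
def addMonoidAlgebraClosureUnionEquiv (R : Type*) [CommSemiring R] {G : Type*} [AddCommGroup G]
    {S T : Set G} (h : Disjoint (AddSubgroup.closure S) (AddSubgroup.closure T)) :
    AddMonoidAlgebra R (AddSubmonoid.closure (S ∪ T)) ≃ₐ[R]
      AddMonoidAlgebra R (AddSubmonoid.closure S) ⊗[R]
        AddMonoidAlgebra R (AddSubmonoid.closure T) :=
  (AddMonoidAlgebra.domCongr R R
    (AddEquiv.ofBijective _ (bijective_coprod_inclusion_of_disjoint_closure h)).symm).trans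
    (addMonoidAlgebraProdEquiv R _ _)

end MonoidAlgebras

section ToricIdeals

open MvPolynomial (monomial rename)

variable {ι κ κ' M : Type*}

/-- The toric ideal of a configuration `c` of elements of a commutative monoid `M`: the relations
between the monomials with exponents `c i` in the monoid algebra of `M`. -/
def toricIdeal (R : Type*) [CommRing R] [AddCommMonoid M] (c : ι → M) : Ideal (MvPolynomial ι R) :=
  RingHom.ker (MvPolynomial.aeval fun i ↦ AddMonoidAlgebra.single (c i) 1 :
    MvPolynomial ι R →ₐ[R] AddMonoidAlgebra R M)

lemma aeval_single_monomial {R : Type*} [CommSemiring R] [AddCommMonoid M] (c : ι → M)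
    (a : ι →₀ ℕ) (r : R) :
    MvPolynomial.aeval (fun i ↦ AddMonoidAlgebra.single (c i) (1 : R)) (monomial a r) =
      AddMonoidAlgebra.single (Finsupp.linearCombination ℕ c a) r := by
  simp [MvPolynomial.aeval_monomial, AddMonoidAlgebra.single_pow, Finsupp.linearCombination_apply]

variable {R : Type*} [CommRing R]

section AddCommMonoid

variable [AddCommMonoid M] {c : ι → M}

lemma monomial_sub_monomial_mem_toricIdeal {a b : ι →₀ ℕ}
    (h : Finsupp.linearCombination ℕ c a = Finsupp.linearCombination ℕ c b) :
    monomial a 1 - monomial b 1 ∈ toricIdeal R c := by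
  rw [toricIdeal, RingHom.mem_ker, map_sub, aeval_single_monomial, aeval_single_monomial, h,
    sub_self]

/-- Choosing one monomial over every element of the monoid gives a linear section `s` of the
evaluation map `φ`, and `p - s (φ p)` is a combination of binomials for every polynomial `p`. -/
theorem toricIdeal_le_of_binomials_mem {J : Ideal (MvPolynomial ι R)}
    (hJ : ∀ a b : ι →₀ ℕ, Finsupp.linearCombination ℕ c a = Finsupp.linearCombination ℕ c b →
      monomial a 1 - monomial b 1 ∈ J) : toricIdeal R c ≤ J := by
  let φ : MvPolynomial ι R →ₐ[R] AddMonoidAlgebra R M :=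
    MvPolynomial.aeval fun i ↦ AddMonoidAlgebra.single (c i) 1
  let representative : M → ι →₀ ℕ := Function.invFun (Finsupp.linearCombination ℕ c)
  let s : AddMonoidAlgebra R M →ₗ[R] MvPolynomial ι R :=
    Finsupp.linearCombination R (fun m ↦ monomial (representative m) (1 : R)) ∘ₗ
      (AddMonoidAlgebra.coeffLinearEquiv R).toLinearMap
  have sub_mem_J (p : MvPolynomial ι R) : p - s (φ p) ∈ J := by
    induction p using MvPolynomial.induction_on' with
    | monomial a r =>
      have hs : s (φ (monomial a r)) =
          r • monomial (representative (Finsupp.linearCombination ℕ c a)) 1 := by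
        simp [s, φ, aeval_single_monomial]
      have hr : monomial a r = r • monomial a 1 := by
        rw [MvPolynomial.smul_monomial, smul_eq_mul, mul_one]
      rw [hs, hr, ← smul_sub]
      exact J.smul_of_tower_mem r (hJ _ _ (Function.invFun_eq ⟨a, rfl⟩).symm)
    | add p q hp hq =>
      rw [map_add, map_add, add_sub_add_comm]
      exact J.add_mem hp hq
  intro p hp
  have hφ : φ p = 0 := hp
  simpa [hφ] using sub_mem_J p

lemma map_rename_toricIdeal_le (f : κ → ι) :
    (toricIdeal R (c ∘ f)).map (rename f : MvPolynomial κ R →ₐ[R] MvPolynomial ι R) ≤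
      toricIdeal R c := by
  refine Ideal.map_le_iff_le_comap.2 fun p hp ↦ ?_
  rw [toricIdeal, RingHom.mem_ker] at hp
  rw [Ideal.mem_comap, toricIdeal, RingHom.mem_ker]
  exact (MvPolynomial.aeval_rename ..).trans hp

end AddCommMonoid

lemma exists_mapDomain_add_mapDomain {A : Type*} [AddCommMonoid A] {f : κ → ι} {g : κ' → ι}
    (hfg : Set.range f ∪ Set.range g = Set.univ) (a : ι →₀ A) :
    ∃ (b : κ →₀ A) (b' : κ' →₀ A), a = b.mapDomain f + b'.mapDomain g := by
  induction a using Finsupp.induction_linear with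
  | zero => exact ⟨0, 0, by simp⟩
  | add a₁ a₂ h₁ h₂ =>
    obtain ⟨b₁, b₁', rfl⟩ := h₁
    obtain ⟨b₂, b₂', rfl⟩ := h₂
    exact ⟨b₁ + b₂, b₁' + b₂', by simp only [Finsupp.mapDomain_add, add_add_add_comm]⟩
  | single i n =>
    obtain ⟨j, rfl⟩ | ⟨j, rfl⟩ := hfg.ge (Set.mem_univ i)
    · exact ⟨Finsupp.single j n, 0, by simp⟩
    · exact ⟨0, Finsupp.single j n, by simp⟩

lemma linearCombination_mem_addSubmonoid_closure_range [AddCommMonoid M] (c : ι → M)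
    (a : ι →₀ ℕ) :
    Finsupp.linearCombination ℕ c a ∈ AddSubmonoid.closure (Set.range c) := by
  rw [Finsupp.linearCombination_apply]
  exact AddSubmonoid.sum_mem _ fun i _ ↦
    AddSubmonoid.nsmul_mem _ (AddSubmonoid.subset_closure (Set.mem_range_self i)) _

theorem toricIdeal_eq_map_rename_sup_map_rename [AddCommGroup M] {c : ι → M} {f : κ → ι}
    {g : κ' → ι} (hfg : Set.range f ∪ Set.range g = Set.univ)
    (h : Disjoint (AddSubgroup.closure (Set.range (c ∘ f)))
      (AddSubgroup.closure (Set.range (c ∘ g)))) :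
    toricIdeal R c =
      (toricIdeal R (c ∘ f)).map (rename f : MvPolynomial κ R →ₐ[R] MvPolynomial ι R) ⊔
        (toricIdeal R (c ∘ g)).map (rename g : MvPolynomial κ' R →ₐ[R] MvPolynomial ι R) := by
  refine le_antisymm (toricIdeal_le_of_binomials_mem fun x y hxy ↦ ?_)
    (sup_le (map_rename_toricIdeal_le f) (map_rename_toricIdeal_le g))
  obtain ⟨a, b, rfl⟩ := exists_mapDomain_add_mapDomain hfg x
  obtain ⟨a', b', rfl⟩ := exists_mapDomain_add_mapDomain hfg y
  simp only [map_add, Finsupp.linearCombination_mapDomain] at hxy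
  obtain ⟨ha, hb⟩ := eq_and_eq_of_add_eq_add_of_disjoint_closure h
    (linearCombination_mem_addSubmonoid_closure_range _ a)
    (linearCombination_mem_addSubmonoid_closure_range _ a')
    (linearCombination_mem_addSubmonoid_closure_range _ b)
    (linearCombination_mem_addSubmonoid_closure_range _ b') hxy
  have monomial_add (u v : ι →₀ ℕ) : monomial (u + v) (1 : R) = monomial u 1 * monomial v 1 := by
    rw [MvPolynomial.monomial_mul, one_mul]
  have hf := Ideal.mem_map_of_mem (rename f : MvPolynomial κ R →ₐ[R] MvPolynomial ι R)
    (monomial_sub_monomial_mem_toricIdeal (R := R) ha)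
  have hg := Ideal.mem_map_of_mem (rename g : MvPolynomial κ' R →ₐ[R] MvPolynomial ι R)
    (monomial_sub_monomial_mem_toricIdeal (R := R) hb)
  rw [map_sub, MvPolynomial.rename_monomial, MvPolynomial.rename_monomial] at hf hg
  rw [monomial_add, monomial_add]
  exact Ideal.mul_sub_mul_mem _ (Ideal.mem_sup_left hf) (Ideal.mem_sup_right hg)

end ToricIdeals

section LatticePolytopes

variable {α : Type*}

lemma intCast_injective : Function.Injective (intCast : (α → ℤ) → α → ℝ) := fun _ _ h ↦
  funext fun i ↦ Int.cast_injective (congrFun h i)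

variable (α) in
/-- The inclusion of the lattice `ℤ^α × ℤ` in `ℝ^α × ℝ`. -/
def intCastProdHom : (α → ℤ) × ℤ →+ (α → ℝ) × ℝ :=
  ((Int.castAddHom ℝ).compLeft α).prodMap (Int.castAddHom ℝ)

lemma intCastProdHom_injective : Function.Injective (intCastProdHom α) :=
  intCast_injective.prodMap Int.cast_injective

lemma image_intCastProdHom_latticeA (L : Set (α → ℤ)) :
    intCastProdHom α '' latticeA L = homogenization ℝ (α → ℝ) '' (intCast '' L) := by
  rw [latticeA, Set.image_image, Set.image_image]
  exact Set.image_congr fun v _ ↦ Prod.ext rfl Int.cast_one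

theorem disjoint_addSubgroup_closure_latticeA [Fintype α] {W Z : Set (α → ℤ)}
    (hdisj : Disjoint W Z) (hWZ : (W ∪ Z).Finite)
    (hfacet : ∀ F, IsFacet (convexHull ℝ (intCast '' (W ∪ Z))) F →
      intCast '' W ⊆ F ∨ intCast '' Z ⊆ F) :
    Disjoint (AddSubgroup.closure (latticeA W)) (AddSubgroup.closure (latticeA Z)) := by
  refine disjoint_addSubgroup_closure_of_disjoint_span (R := ℝ) intCastProdHom_injective ?_
  rw [image_intCastProdHom_latticeA, image_intCastProdHom_latticeA]
  have hfinite : (intCast '' W ∪ intCast '' Z : Set (α → ℝ)).Finite := by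
    rw [← Set.image_union]
    exact hWZ.image intCast
  rw [Set.image_union] at hfacet
  exact disjoint_span_homogenization hfinite ((Set.disjoint_image_iff intCast_injective).2 hdisj)
    hfacet

variable (𝕜 : Type*) [Field 𝕜] {d : ℕ} {W Z : Set (Fin d → ℤ)}

theorem nonempty_toricRing_union_algEquiv
    (h : Disjoint (AddSubgroup.closure (latticeA W)) (AddSubgroup.closure (latticeA Z))) :
    Nonempty (toricRing 𝕜 (W ∪ Z) ≃ₐ[𝕜] (toricRing 𝕜 W ⊗[𝕜] toricRing 𝕜 Z)) := by
  have latticeA_union : latticeA (W ∪ Z) = latticeA W ∪ latticeA Z := Set.image_union ..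
  unfold toricRing
  rw [latticeA_union]
  exact ⟨addMonoidAlgebraClosureUnionEquiv 𝕜 h⟩

theorem toricIdealOf_union
    (h : Disjoint (AddSubgroup.closure (latticeA W)) (AddSubgroup.closure (latticeA Z))) :
    toricIdealOf 𝕜 (W ∪ Z) =
      Ideal.map (MvPolynomial.rename
          (Set.inclusion (Set.subset_union_left : W ⊆ W ∪ Z))).toRingHom
        (toricIdealOf 𝕜 W) ⊔
      Ideal.map (MvPolynomial.rename
          (Set.inclusion (Set.subset_union_right : Z ⊆ W ∪ Z))).toRingHom
        (toricIdealOf 𝕜 Z) := by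
  have range_eq (L : Set (Fin d → ℤ)) :
      Set.range (fun v : L ↦ ((v : Fin d → ℤ), (1 : ℤ))) = latticeA L :=
    (Set.image_eq_range (fun v ↦ (v, (1 : ℤ))) L).symm
  refine toricIdeal_eq_map_rename_sup_map_rename
    (c := fun v : ↑(W ∪ Z) ↦ ((v : Fin d → ℤ), (1 : ℤ))) ?_ ?_
  · rw [Set.range_inclusion, Set.range_inclusion]
    exact Set.eq_univ_of_forall fun v ↦ v.2
  · rw [← range_eq, ← range_eq] at h
    exact h

end LatticePolytopes

theorem stmt_11_general (𝕜 : Type*) [Field 𝕜] {d : ℕ} {W Z : Set (Fin d → ℤ)}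
    (hdisj : Disjoint W Z) (hWZ : (W ∪ Z).Finite)
    (hfacet : ∀ F, IsFacet (convexHull ℝ (intCast '' (W ∪ Z))) F →
      intCast '' W ⊆ F ∨ intCast '' Z ⊆ F) :
    Nonempty (toricRing 𝕜 (W ∪ Z) ≃ₐ[𝕜] (toricRing 𝕜 W ⊗[𝕜] toricRing 𝕜 Z)) ∧
      toricIdealOf 𝕜 (W ∪ Z) =
        Ideal.map (MvPolynomial.rename
            (Set.inclusion (Set.subset_union_left : W ⊆ W ∪ Z))).toRingHom
          (toricIdealOf 𝕜 W) ⊔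
        Ideal.map (MvPolynomial.rename
            (Set.inclusion (Set.subset_union_right : Z ⊆ W ∪ Z))).toRingHom
          (toricIdealOf 𝕜 Z) := by
  have closures_disjoint := disjoint_addSubgroup_closure_latticeA hdisj hWZ hfacet
  exact ⟨nonempty_toricRing_union_algEquiv 𝕜 closures_disjoint,
    toricIdealOf_union 𝕜 closures_disjoint⟩

theorem stmt_11 (𝕜 : Type*) [Field 𝕜] (d : ℕ)
    (W Z : Set (Fin d → ℤ)) (hWne : W.Nonempty) (hZne : Z.Nonempty)
    (hdisj : Disjoint W Z) (hWZfin : (W ∪ Z).Finite)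
    (h01 : ∀ v ∈ W ∪ Z, ∀ i, v i = 0 ∨ v i = 1)
    (P : Set (Fin d → ℝ)) (hP : P = convexHull ℝ (intCast '' (W ∪ Z)))
    (hlat : latticePts P = W ∪ Z)
    (hfacet : ∀ F : Set (Fin d → ℝ), IsFacet P F →
      intCast '' W ⊆ F ∨ intCast '' Z ⊆ F) :
    Nonempty (toricRing 𝕜 (W ∪ Z) ≃ₐ[𝕜] (toricRing 𝕜 W ⊗[𝕜] toricRing 𝕜 Z)) ∧
      toricIdealOf 𝕜 (W ∪ Z) =
        Ideal.map (MvPolynomial.rename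
            (Set.inclusion (Set.subset_union_left : W ⊆ W ∪ Z))).toRingHom
          (toricIdealOf 𝕜 W) ⊔
        Ideal.map (MvPolynomial.rename
            (Set.inclusion (Set.subset_union_right : Z ⊆ W ∪ Z))).toRingHom
          (toricIdealOf 𝕜 Z) := by
  subst hP
  exact stmt_11_general 𝕜 hdisj hWZfin hfacet

end
end

section
/- Let Q1 = conv({(0,0,0,0), (1,1,0,0), (1,0,1,0), (0,1,1,0), (0,0,0,1), (1,1,1,1)}) ⊂ ℝ^4. For every integer m ≥ 0 the (0,1)-polytope Q1 × [0,1]^m ⊂ ℝ^{4+m} is not normal: the vector (1,1,1,0, 0,…,0, 2) ∈ ℤ^{5+m} (first three coordinates 1, last coordinate 2, all other coordinates 0) lies in ℤA(Q1 × [0,1]^m) ∩ ℝ≥0A(Q1 × [0,1]^m) but not in ℕA(Q1 × [0,1]^m). In particular Q1 itself (the case m = 0) is a non-normal (0,1)-polytope. -/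
/-!
STATEMENT 12: `Q1 = conv({0000, 1100, 1010, 0110, 0001, 1111}) ⊆ ℝ⁴`.  For every
`m ≥ 0` the polytope `Q1 × [0,1]^m` is not normal: the vector
`(1,1,1,0,0,…,0,2)` lies in `ℤA ∩ ℝ≥0A` but not in `ℕA`.
-/

open scoped NNReal

noncomputable section

def prodCast {α : Type*} (x : (α → ℤ) × ℤ) : (α → ℝ) × ℝ :=
  (intCast x.1, (x.2 : ℝ))

/-- Normality: `ℕA(P) = ℤA(P) ∩ ℝ≥0A(P)`. -/
def IsNormalPolytope {α : Type*} (L : Set (α → ℤ)) : Prop :=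
  ∀ x : (α → ℤ) × ℤ,
    x ∈ AddSubmonoid.closure (latticeA L) ↔
      x ∈ AddSubgroup.closure (latticeA L) ∧
        prodCast x ∈ Submodule.span ℝ≥0 (prodCast '' latticeA L)

/-- The six vertices (= lattice points) of `Q1`. -/
def V1 : Set (Fin 4 → ℤ) :=
  {![0,0,0,0], ![1,1,0,0], ![1,0,1,0], ![0,1,1,0], ![0,0,0,1], ![1,1,1,1]}

/-- The lattice points of `Q1 × [0,1]^m`: pairs `(v, w)` with `v` a vertex of
`Q1` and `w ∈ {0,1}^m`. -/
def cubeProdLattice (m : ℕ) : Set ((Fin 4 ⊕ Fin m) → ℤ) :=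
  {v | ∃ a ∈ V1, ∃ w : Fin m → ℤ, (∀ i, w i = 0 ∨ w i = 1) ∧ v = Sum.elim a w}

/-- The witness vector `(1,1,1,0,0,…,0,2) ∈ ℤ^{5+m}`. -/
def witness (m : ℕ) : ((Fin 4 ⊕ Fin m) → ℤ) × ℤ :=
  (Sum.elim ![1,1,1,0] 0, 2)

/-!
The coordinate `x₄` is nonnegative on `Q1`, so a sum of lattice points of height one with `x₄ = 0`
only involves vertices on the face `x₄ = 0`. On that face `x₁ + x₂ + x₃` is even, so `(1,1,1,0;2)`
is not such a sum. It is half the sum of the four vertices of the face, hence in the cone, and it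
is `(1,1,1,1;1) - (0,0,0,1;1) + 2 (0,0,0,0;1)`, hence in the group. For a lattice point `b` of `P`,
the slice `Q1 × {b}` of `Q1 × P` carries this obstruction over to `Q1 × P`, because the projection
to `Q1` sends lattice points to lattice points.
-/

section Holes

variable {α β : Type*} {L : Set (α → ℤ)} {x : (α → ℤ) × ℤ}

theorem mem_latticeA_iff : x ∈ latticeA L ↔ x.1 ∈ L ∧ x.2 = 1 := by
  constructor
  · rintro ⟨v, hv, rfl⟩
    exact ⟨hv, rfl⟩
  · rintro ⟨hv, h1⟩
    exact ⟨x.1, hv, Prod.ext rfl h1.symm⟩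

/-- A hole of `ℕA`: a point of `ℤA ∩ ℝ≥0A` that is not in `ℕA`, that is, an obstruction to
normality. As in `IsNormalPolytope`, the polytope is represented by its set `L` of lattice
points. -/
def IsHole (L : Set (α → ℤ)) (x : (α → ℤ) × ℤ) : Prop :=
  x ∈ AddSubgroup.closure (latticeA L) ∧
    prodCast x ∈ Submodule.span ℝ≥0 (prodCast '' latticeA L) ∧
    x ∉ AddSubmonoid.closure (latticeA L)

theorem IsHole.not_isNormalPolytope (hx : IsHole L x) : ¬ IsNormalPolytope L :=
  fun h => hx.2.2 ((h x).2 ⟨hx.1, hx.2.1⟩)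

/-- The inclusion `prodCast` of the lattice `ℤ^α × ℤ` in `ℝ^α × ℝ`, as an additive homomorphism. -/
def prodCastHom : (α → ℤ) × ℤ →+ (α → ℝ) × ℝ where
  toFun := prodCast
  map_zero' := by ext <;> simp [prodCast, intCast]
  map_add' x y := by ext <;> simp [prodCast, intCast]

theorem prodCast_mem_span_of_mem_closure (hx : x ∈ AddSubmonoid.closure (latticeA L)) :
    prodCast x ∈ Submodule.span ℝ≥0 (prodCast '' latticeA L) := by
  suffices AddSubmonoid.closure (latticeA L) ≤
      (Submodule.span ℝ≥0 (prodCast '' latticeA L)).toAddSubmonoid.comap prodCastHom from this hx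
  exact AddSubmonoid.closure_le.2 fun v hv => Submodule.subset_span (Set.mem_image_of_mem _ hv)

theorem prodCast_mem_span_of_nsmul_mem_closure {n : ℕ} (hn : n ≠ 0)
    (hx : n • x ∈ AddSubmonoid.closure (latticeA L)) :
    prodCast x ∈ Submodule.span ℝ≥0 (prodCast '' latticeA L) := by
  have hcast : prodCast (n • x) = (n : ℝ≥0) • prodCast x :=
    (map_nsmul prodCastHom n x).trans (Nat.cast_smul_eq_nsmul ℝ≥0 n _).symm
  have hspan := prodCast_mem_span_of_mem_closure hx
  rw [hcast] at hspan
  exact (Submodule.smul_mem_iff _ (Nat.cast_ne_zero.2 hn)).1 hspan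

/-- The homogenization `(v, t) ↦ (v, t b, t)` of the affine embedding `v ↦ (v, b)` of a polytope
`P` as the slice `P × {b}` of a product. It is used over both `ℤ` and `ℝ`. -/
def homogenizedSlice {R : Type*} [CommSemiring R] (b : β → R) :
    (α → R) × R →ₗ[R] (α ⊕ β → R) × R where
  toFun x := (Sum.elim x.1 (x.2 • b), x.2)
  map_add' x y := by ext (i | i) <;> simp [add_mul]
  map_smul' r x := by ext (i | i) <;> simp [mul_assoc]

theorem prodCast_homogenizedSlice (b : β → ℤ) (x : (α → ℤ) × ℤ) :
    prodCast (homogenizedSlice b x) = homogenizedSlice (intCast b) (prodCast x) := by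
  ext (i | i) <;> simp [homogenizedSlice, prodCast, intCast]

variable {M : Set (β → ℤ)} {b : β → ℤ}

theorem mapsTo_homogenizedSlice_latticeA (hb : b ∈ M) :
    Set.MapsTo (homogenizedSlice b) (latticeA L) (latticeA (Set.image2 Sum.elim L M)) := by
  rintro _ ⟨v, hv, rfl⟩
  exact ⟨Sum.elim v b, ⟨v, hv, b, hb, rfl⟩, by simp [homogenizedSlice]⟩

theorem homogenizedSlice_mem_addSubgroupClosure (hb : b ∈ M)
    (hx : x ∈ AddSubgroup.closure (latticeA L)) :
    homogenizedSlice b x ∈ AddSubgroup.closure (latticeA (Set.image2 Sum.elim L M)) := by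
  suffices AddSubgroup.closure (latticeA L) ≤
      (AddSubgroup.closure (latticeA (Set.image2 Sum.elim L M))).comap
        (homogenizedSlice b).toAddMonoidHom from this hx
  exact (AddSubgroup.closure_le _).2 fun v hv =>
    AddSubgroup.subset_closure (mapsTo_homogenizedSlice_latticeA hb hv)

theorem prodCast_homogenizedSlice_mem_span (hb : b ∈ M)
    (hx : prodCast x ∈ Submodule.span ℝ≥0 (prodCast '' latticeA L)) :
    prodCast (homogenizedSlice b x) ∈
      Submodule.span ℝ≥0 (prodCast '' latticeA (Set.image2 Sum.elim L M)) := by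
  rw [prodCast_homogenizedSlice]
  suffices Submodule.span ℝ≥0 (prodCast '' latticeA L) ≤
      (Submodule.span ℝ≥0 (prodCast '' latticeA (Set.image2 Sum.elim L M))).comap
        ((homogenizedSlice (intCast b)).restrictScalars ℝ≥0) from this hx
  rw [Submodule.span_le]
  rintro _ ⟨v, hv, rfl⟩
  exact Submodule.subset_span
    ⟨_, mapsTo_homogenizedSlice_latticeA hb hv, prodCast_homogenizedSlice b v⟩

theorem comp_inl_mem_addSubmonoidClosure {y : (α ⊕ β → ℤ) × ℤ}
    (hy : y ∈ AddSubmonoid.closure (latticeA (Set.image2 Sum.elim L M))) :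
    (y.1 ∘ Sum.inl, y.2) ∈ AddSubmonoid.closure (latticeA L) := by
  suffices AddSubmonoid.closure (latticeA (Set.image2 Sum.elim L M)) ≤
      (AddSubmonoid.closure (latticeA L)).comap
        ((LinearMap.funLeft ℤ ℤ Sum.inl).prodMap LinearMap.id).toAddMonoidHom from this hy
  rw [AddSubmonoid.closure_le]
  rintro _ ⟨_, ⟨v, hv, w, -, rfl⟩, rfl⟩
  exact AddSubmonoid.subset_closure ⟨v, hv, rfl⟩

theorem IsHole.homogenizedSlice (hx : IsHole L x) (hb : b ∈ M) :
    IsHole (Set.image2 Sum.elim L M) (homogenizedSlice b x) :=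
  ⟨homogenizedSlice_mem_addSubgroupClosure hb hx.1,
    prodCast_homogenizedSlice_mem_span hb hx.2.1,
    fun h => hx.2.2 (comp_inl_mem_addSubmonoidClosure h)⟩

end Holes

theorem mem_closure_sep_of_map_eq_zero {G N : Type*} [AddZeroClass G] [AddCommMonoid N]
    [PartialOrder N] [IsOrderedAddMonoid N] {s : Set G} {x : G} (φ : G →+ N)
    (hφ : ∀ g ∈ s, 0 ≤ φ g) (hx : x ∈ AddSubmonoid.closure s) (hx0 : φ x = 0) :
    x ∈ AddSubmonoid.closure {g ∈ s | φ g = 0} := by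
  suffices 0 ≤ φ x ∧ (φ x = 0 → x ∈ AddSubmonoid.closure {g ∈ s | φ g = 0}) from this.2 hx0
  clear hx0
  induction hx using AddSubmonoid.closure_induction with
  | mem g hg => exact ⟨hφ g hg, fun h0 => AddSubmonoid.subset_closure ⟨hg, h0⟩⟩
  | zero => exact ⟨(map_zero φ).ge, fun _ => zero_mem _⟩
  | add g h _ _ ihg ihh =>
    rw [map_add]
    refine ⟨add_nonneg ihg.1 ihh.1, fun hgh => ?_⟩
    obtain ⟨hg0, hh0⟩ := (add_eq_zero_iff_of_nonneg ihg.1 ihh.1).1 hgh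
    exact add_mem (ihg.2 hg0) (ihh.2 hh0)

section Q1

theorem apply_three_nonneg_of_mem_V1 {v : Fin 4 → ℤ} (hv : v ∈ V1) : 0 ≤ v 3 := by
  rcases hv with rfl | rfl | rfl | rfl | rfl | rfl <;> decide

theorem even_of_mem_V1_of_apply_three_eq_zero {v : Fin 4 → ℤ} (hv : v ∈ V1) (h3 : v 3 = 0) :
    Even (v 0 + v 1 + v 2) := by
  rcases hv with rfl | rfl | rfl | rfl | rfl | rfl <;> revert h3 <;> decide

theorem even_of_mem_closure_of_apply_three_eq_zero {x : (Fin 4 → ℤ) × ℤ}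
    (hx : x ∈ AddSubmonoid.closure (latticeA V1)) (h3 : x.1 3 = 0) :
    Even (x.1 0 + x.1 1 + x.1 2) := by
  let coord (i : Fin 4) : (Fin 4 → ℤ) × ℤ →+ ℤ :=
    (Pi.evalAddMonoidHom _ i).comp (AddMonoidHom.fst _ _)
  have hface : x ∈ AddSubmonoid.closure {g ∈ latticeA V1 | coord 3 g = 0} :=
    mem_closure_sep_of_map_eq_zero (coord 3)
      (fun g hg => apply_three_nonneg_of_mem_V1 (mem_latticeA_iff.1 hg).1) hx h3
  suffices AddSubmonoid.closure {g ∈ latticeA V1 | coord 3 g = 0} ≤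
      (AddSubmonoid.even ℤ).comap (coord 0 + coord 1 + coord 2) from this hface
  exact AddSubmonoid.closure_le.2 fun g hg =>
    even_of_mem_V1_of_apply_three_eq_zero (mem_latticeA_iff.1 hg.1).1 hg.2

theorem V1_hole_mem_addSubgroupClosure :
    ((![1, 1, 1, 0], 2) : (Fin 4 → ℤ) × ℤ) ∈ AddSubgroup.closure (latticeA V1) := by
  have hmem (v : Fin 4 → ℤ) (hv : v ∈ V1) : (v, (1 : ℤ)) ∈ AddSubgroup.closure (latticeA V1) :=
    AddSubgroup.subset_closure ⟨v, hv, rfl⟩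
  have hdecomp : ((![1, 1, 1, 0], 2) : (Fin 4 → ℤ) × ℤ) =
      (![1, 1, 1, 1], 1) - (![0, 0, 0, 1], 1) + 2 • (![0, 0, 0, 0], 1) := by decide
  rw [hdecomp]
  exact add_mem (sub_mem (hmem _ (by simp [V1])) (hmem _ (by simp [V1])))
    (nsmul_mem (hmem _ (by simp [V1])) 2)

theorem two_nsmul_V1_hole_mem_addSubmonoidClosure :
    2 • ((![1, 1, 1, 0], 2) : (Fin 4 → ℤ) × ℤ) ∈ AddSubmonoid.closure (latticeA V1) := by
  have hmem (v : Fin 4 → ℤ) (hv : v ∈ V1) : (v, (1 : ℤ)) ∈ AddSubmonoid.closure (latticeA V1) :=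
    AddSubmonoid.subset_closure ⟨v, hv, rfl⟩
  have hdecomp : 2 • ((![1, 1, 1, 0], 2) : (Fin 4 → ℤ) × ℤ) =
      (![0, 0, 0, 0], 1) + (![1, 1, 0, 0], 1) + (![1, 0, 1, 0], 1) + (![0, 1, 1, 0], 1) := by
    decide
  rw [hdecomp]
  exact add_mem (add_mem (add_mem (hmem _ (by simp [V1])) (hmem _ (by simp [V1])))
    (hmem _ (by simp [V1]))) (hmem _ (by simp [V1]))

theorem isHole_V1 : IsHole V1 (![1, 1, 1, 0], 2) := by
  refine ⟨V1_hole_mem_addSubgroupClosure, prodCast_mem_span_of_nsmul_mem_closure two_ne_zero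
    two_nsmul_V1_hole_mem_addSubmonoidClosure, fun h => ?_⟩
  have heven : Even (1 + 1 + 1 : ℤ) := even_of_mem_closure_of_apply_three_eq_zero h rfl
  exact absurd heven (by decide)

end Q1

theorem cubeProdLattice_eq_image2 (m : ℕ) :
    cubeProdLattice m = Set.image2 Sum.elim V1 {w | ∀ i, w i = 0 ∨ w i = 1} := by
  ext v
  simp only [cubeProdLattice, Set.mem_image2, Set.mem_ofPred_eq, eq_comm]

theorem stmt_12_general {β : Type*} {M : Set (β → ℤ)} {b : β → ℤ} (hb : b ∈ M) :
    IsHole (Set.image2 Sum.elim V1 M) (Sum.elim ![1, 1, 1, 0] ((2 : ℤ) • b), 2) ∧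
      ¬ IsNormalPolytope (Set.image2 Sum.elim V1 M) :=
  have hole := isHole_V1.homogenizedSlice hb
  ⟨hole, hole.not_isNormalPolytope⟩

theorem stmt_12 (m : ℕ) :
    (witness m ∈ AddSubgroup.closure (latticeA (cubeProdLattice m)) ∧
      prodCast (witness m) ∈
        Submodule.span ℝ≥0 (prodCast '' latticeA (cubeProdLattice m)) ∧
      witness m ∉ AddSubmonoid.closure (latticeA (cubeProdLattice m))) ∧
    ¬ IsNormalPolytope (cubeProdLattice m) := by
  have zero_mem_cube : (0 : Fin m → ℤ) ∈ {w : Fin m → ℤ | ∀ i, w i = 0 ∨ w i = 1} :=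
    fun _ => Or.inl rfl
  simpa only [cubeProdLattice_eq_image2, IsHole, witness, smul_zero] using
    stmt_12_general zero_mem_cube

end
end

section
/- Let G ⊆ ℤ^8 be the subgroup generated by the six vectors (1,1,1,1,0,0,0,0), (0,0,0,0,1,1,1,1), (2,0,0,0,2,0,0,0), (0,2,0,0,0,2,0,0), (0,0,2,0,0,0,2,0), (0,0,0,2,0,0,0,2) (the columns of the matrix M_{Q2} of facet-pairings of the polytope Q2). Then ℤ^8 / G ≅ ℤ^3 ⊕ (ℤ/2ℤ)^3. (By the standard description of divisor class groups of normal toric rings, this says that Cl(𝕜[Q2]) ≅ ℤ^3 ⊕ (ℤ/2ℤ)^3, so Q2 is a normal (0,1)-polytope of rank 3 whose divisor class group has torsion.) -/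
/-!
STATEMENT 14: for the subgroup `G ⊆ ℤ⁸` generated by the six columns of the
matrix `M_{Q2}`, one has `ℤ⁸ / G ≅ ℤ³ ⊕ (ℤ/2ℤ)³`
(so `Cl(𝕜[Q2]) ≅ ℤ³ ⊕ (ℤ/2ℤ)³`).
-/

noncomputable section

/-- The six columns of the matrix `M_{Q2}`. -/
def colsMQ2 : Fin 6 → (Fin 8 → ℤ) :=
  ![![1,1,1,1,0,0,0,0],
    ![0,0,0,0,1,1,1,1],
    ![2,0,0,0,2,0,0,0],
    ![0,2,0,0,0,2,0,0],
    ![0,0,2,0,0,0,2,0],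
    ![0,0,0,2,0,0,0,2]]

/-!
Write a vector of even length as a pair `(a, b)` of halves and apply the shear
`(a, b) ↦ (a - b, b)`. The generators `(1, 0)`, `(0, 1)` and `(r eᵢ, r eᵢ)` become `(1, 0)`,
`(-1, 1)` and `(0, r eᵢ)`, so the submodule they span splits as the product of the constants in
the first factor and the constants modulo `r` in the second. Dividing a power of a module by its
constant vectors amounts to subtracting the first coordinate from the others.
-/

section Differences

variable (R : Type*) {A : Type*} [Ring R] [AddCommGroup A] [Module R A] {n : ℕ}

/-- The linear map `(x₀, …, xₙ) ↦ (x₁ - x₀, …, xₙ - x₀)`, which presents `Aⁿ` as the quotient of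
`Aⁿ⁺¹` by the constant vectors. -/
def diffFromFirst : (Fin (n + 1) → A) →ₗ[R] (Fin n → A) :=
  LinearMap.funLeft R A Fin.succ - LinearMap.funLeft R A fun _ => 0

@[simp]
lemma diffFromFirst_apply (x : Fin (n + 1) → A) (i : Fin n) :
    diffFromFirst R x i = x i.succ - x 0 := rfl

lemma diffFromFirst_surjective :
    Function.Surjective (diffFromFirst R : (Fin (n + 1) → A) →ₗ[R] (Fin n → A)) :=
  fun y => ⟨Fin.cons 0 y, by ext i; simp⟩

lemma diffFromFirst_eq_zero_iff {x : Fin (n + 1) → A} :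
    diffFromFirst R x = 0 ↔ ∀ i, x i = x 0 := by
  simp [funext_iff, Fin.forall_fin_succ, sub_eq_zero]

end Differences

section PairedColumns

variable {R M : Type*} [Ring R] [AddCommGroup M] [Module R M] {n : ℕ}

/-- The vectors `(1, 0)`, `(0, 1)` and `(r eᵢ, r eᵢ)` of `Rⁿ⁺¹ × Rⁿ⁺¹`, the two halves being
concatenated. The matrix `M_{Q2}` is the case `n = 3`, `r = 2`. -/
def pairedColumns (n : ℕ) (r : R) : Fin (2 + (n + 1)) → (Fin (n + 1 + (n + 1)) → R) :=
  Fin.append ![Fin.append 1 0, Fin.append 0 1]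
    fun i => Fin.append (Pi.single i r) (Pi.single i r)

/-- The linear automorphism `(a, b) ↦ (a - b, b)` on concatenated halves, as a map to the
product. -/
def shearHalves (R : Type*) [Ring R] (n : ℕ) :
    (Fin (n + n) → R) →ₗ[R] (Fin n → R) × (Fin n → R) :=
  (LinearMap.funLeft R R (Fin.castAdd n) - LinearMap.funLeft R R (Fin.natAdd n)).prod
    (LinearMap.funLeft R R (Fin.natAdd n))

@[simp]
lemma shearHalves_append (a b : Fin n → R) : shearHalves R n (Fin.append a b) = (a - b, b) := by
  ext i <;> simp [shearHalves, LinearMap.funLeft_apply, -Fin.natAdd_eq_addNat]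

lemma shearHalves_surjective : Function.Surjective (shearHalves R n) :=
  fun (c, b) => ⟨Fin.append (c + b) b, by simp⟩

/-- The map `(a, b) ↦ (δ (a - b), δ (π b))`, where `δ` is `diffFromFirst`. It presents the
cokernel of `pairedColumns n r` when `π` presents `R ⧸ R r`. -/
def pairedCokernelMap (n : ℕ) (π : R →ₗ[R] M) :
    (Fin (n + 1 + (n + 1)) → R) →ₗ[R] (Fin n → R) × (Fin n → M) :=
  ((diffFromFirst R).prodMap (diffFromFirst R ∘ₗ π.compLeft (Fin (n + 1)))) ∘ₗ
    shearHalves R (n + 1)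

lemma pairedCokernelMap_append (π : R →ₗ[R] M) (a b : Fin (n + 1) → R) :
    pairedCokernelMap n π (Fin.append a b) =
      (diffFromFirst R (a - b), diffFromFirst R (π ∘ b)) := by
  rw [pairedCokernelMap, LinearMap.comp_apply, shearHalves_append]
  rfl

lemma pairedCokernelMap_surjective {π : R →ₗ[R] M} (hπ : Function.Surjective π) :
    Function.Surjective (pairedCokernelMap n π) :=
  ((diffFromFirst_surjective R).prodMap
    ((diffFromFirst_surjective R).comp hπ.comp_left)).comp shearHalves_surjective

lemma pairedCokernelMap_pairedColumns {π : R →ₗ[R] M} {r : R} (hr : π r = 0)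
    (j : Fin (2 + (n + 1))) : pairedCokernelMap n π (pairedColumns n r j) = 0 := by
  refine Fin.addCases (fun k => ?_) (fun i => ?_) j
  · fin_cases k <;>
      simp [pairedColumns, pairedCokernelMap_append, diffFromFirst_eq_zero_iff]
  · have hsingle : π ∘ (Pi.single i r : Fin (n + 1) → R) = 0 := by
      ext k
      simp [Pi.single_apply, apply_ite π, hr]
    simp [pairedColumns, pairedCokernelMap_append, hsingle]

lemma sum_smul_pairedColumns (r c d : R) (k : Fin (n + 1) → R) :
    ∑ j, Fin.append ![c, d] k j • pairedColumns n r j =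
      Fin.append (fun i => c + k i * r) (fun i => d + k i * r) := by
  ext i
  refine Fin.addCases (fun i => ?_) (fun i => ?_) i <;>
    simp [pairedColumns, Fin.sum_univ_add, Pi.single_apply, -Fin.natAdd_eq_addNat]

lemma ker_pairedCokernelMap {π : R →ₗ[R] M} {r : R} (hπ : π.ker = R ∙ r) :
    (pairedCokernelMap n π).ker = Submodule.span R (Set.range (pairedColumns n r)) := by
  apply le_antisymm
  · intro x hx
    obtain ⟨a, b, rfl⟩ : ∃ a b, x = Fin.append a b := ⟨_, _, (Fin.append_castAdd_natAdd).symm⟩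
    obtain ⟨ha, hb⟩ : (∀ i, a i - b i = a 0 - b 0) ∧ ∀ i, π (b i) = π (b 0) := by
      simpa only [LinearMap.mem_ker, pairedCokernelMap_append, Prod.mk_eq_zero,
        diffFromFirst_eq_zero_iff, Pi.sub_apply, Function.comp_apply] using hx
    have hmod (i) : ∃ k : R, k * r = b i - b 0 := by
      rw [← Ideal.mem_span_singleton', ← Ideal.submodule_span_eq, ← hπ, LinearMap.mem_ker,
        map_sub, hb i, sub_self]
    choose k hk using hmod
    have hb' : b = fun i => b 0 + k i * r := funext fun i => by rw [hk, add_sub_cancel]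
    have ha' : a = fun i => a 0 + k i * r := funext fun i => by
      rw [hk, ← sub_add_cancel (a i) (b i), ha i]; abel
    rw [ha', hb', ← sum_smul_pairedColumns]
    exact Submodule.sum_smul_mem _ _ fun j _ => Submodule.subset_span ⟨j, rfl⟩
  · have hr : π r = 0 := LinearMap.mem_ker.mp (hπ ▸ Submodule.mem_span_singleton_self r)
    rw [Submodule.span_le]
    rintro _ ⟨j, rfl⟩
    exact pairedCokernelMap_pairedColumns hr j

end PairedColumns

theorem stmt_14_general (n m : ℕ) :
    Nonempty
      (((Fin (n + 1 + (n + 1)) → ℤ) ⧸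
          AddSubgroup.closure (Set.range (pairedColumns n (m : ℤ)))) ≃+
        ((Fin n → ℤ) × (Fin n → ZMod m))) := by
  let π : ℤ →ₗ[ℤ] ZMod m := (Int.castAddHom (ZMod m)).toIntLinearMap
  have hπ : π.ker = ℤ ∙ (m : ℤ) := by
    ext a
    change (a : ZMod m) = 0 ↔ a ∈ ℤ ∙ (m : ℤ)
    rw [ZMod.intCast_zmod_eq_zero_iff_dvd, ← Ideal.mem_span_singleton]
  have hker : AddSubgroup.closure (Set.range (pairedColumns n (m : ℤ))) =
      (pairedCokernelMap n π).toAddMonoidHom.ker := by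
    rw [← Submodule.span_int_eq_addSubgroupClosure, ← ker_pairedCokernelMap hπ]
    rfl
  exact ⟨(QuotientAddGroup.quotientAddEquivOfEq hker).trans
    (QuotientAddGroup.quotientKerEquivOfSurjective _
      (pairedCokernelMap_surjective ZMod.intCast_surjective))⟩

theorem stmt_14 :
    Nonempty
      (((Fin 8 → ℤ) ⧸ AddSubgroup.closure (Set.range colsMQ2)) ≃+
        ((Fin 3 → ℤ) × (Fin 3 → ZMod 2))) := by
  have hcols : colsMQ2 = pairedColumns 3 ((2 : ℕ) : ℤ) := by decide
  exact hcols ▸ stmt_14_general 3 2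

end
end

section
/- Let Q1 = conv({(0,0,0,0), (1,1,0,0), (1,0,1,0), (0,1,1,0), (0,0,0,1), (1,1,1,1)}) and Q2 = conv({(0,0,0,0), (1,0,0,0), (0,1,0,1), (0,0,1,1), (1,1,1,0), (1,1,1,1)}) in ℝ^4. Then the toric ring 𝕜[Q2] is integrally closed (a normal domain) while 𝕜[Q1] is not integrally closed; consequently 𝕜[Q1] and 𝕜[Q2] are not isomorphic as 𝕜-algebras, even though Q1 and Q2 are combinatorially equivalent (0,1)-polytopes with the same number of vertices and facets. -/
/-!
STATEMENT 15: the toric ring `𝕜[Q2]` is integrally closed while `𝕜[Q1]` is not;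
consequently `𝕜[Q1]` and `𝕜[Q2]` are not isomorphic as `𝕜`-algebras.
-/

open scoped NNReal

noncomputable section

/-- The six vertices (= lattice points) of `Q2`. -/
def V2 : Set (Fin 4 → ℤ) :=
  {![0,0,0,0], ![1,0,0,0], ![0,1,0,1], ![0,0,1,1], ![1,1,1,0], ![1,1,1,1]}

/-!
Let `S` be an `R`-algebra with an `R`-linear retraction `S → R`. If `S` is an integrally closed
domain then so is `R`: a fraction `a / b` integral over `R` lies in `S`, so `b` divides `a` in `S`,
and the retraction carries the quotient back to `R`. For a monoid `M` cut out of a lattice by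
finitely many inequalities `0 ≤ ℓ i x`, the values `ℓ i x` embed `M` in `ι →₀ ℕ`. A nonnegative
difference of two elements of the image is again in the image, so discarding the monomials outside
the image is a `𝕜[M]`-linear retraction of a polynomial ring onto `𝕜[M]`.

Placed at height one, the vertices `v₀, …, v₅` of `Q2`, in the order listed, satisfy the single
relation `v₁ + v₂ + v₃ + v₄ = 2 (v₀ + v₅)`; shifting coefficients along it shows that the monoid
they generate is cut out by the eight inequalities `0 ≤ 2 aᵢ + bⱼ` on the coefficients `aᵢ` of
`v₁, …, v₄` and `bⱼ` of `v₀, v₅`. For `Q1`, the point `(1, 1, 1, 0)` at height two equals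
`2 v₀ + v₅ - v₄` and its double is `v₀ + v₁ + v₂ + v₃`, but for parity reasons it is not itself a
sum of vertices, whereas normality would force it to be one.
-/

section Retraction

theorem isIntegrallyClosed_of_retraction {R S : Type*} [CommRing R] [CommRing S] [IsDomain S]
    [IsIntegrallyClosed S] [Algebra R S] (p : S →ₗ[R] R) (hp : p 1 = 1) :
    IsIntegrallyClosed R := by
  have p_algebraMap (r : R) : p (algebraMap R S r) = r := by
    rw [Algebra.algebraMap_eq_smul_one, map_smul, hp, smul_eq_mul, mul_one]
  have : FaithfulSMul R S :=
    (faithfulSMul_iff_algebraMap_injective R S).2 (Function.LeftInverse.injective p_algebraMap)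
  have : IsDomain R := IsDomain.of_faithfulSMul R S
  let _ : Algebra (FractionRing R) (FractionRing S) := FractionRing.liftAlgebra R (FractionRing S)
  refine (isIntegrallyClosed_iff (FractionRing R)).2 fun {x} hx ↦ ?_
  obtain ⟨a, b, hb, rfl⟩ := IsFractionRing.div_surjective (A := R) x
  obtain ⟨c, hc⟩ := IsIntegrallyClosed.isIntegral_iff.1
    ((hx.algebraMap (B := FractionRing S)).tower_top (A := S))
  have b_ne_zero : b ≠ 0 := nonZeroDivisors.ne_zero hb
  have mul_c : b • c = algebraMap R S a := by
    apply IsFractionRing.injective S (FractionRing S)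
    rw [Algebra.smul_def, map_mul, hc, map_div₀]
    simp only [← IsScalarTower.algebraMap_apply]
    exact mul_div_cancel₀ _ (by simpa using b_ne_zero)
  refine ⟨p c, ?_⟩
  rw [eq_div_iff (by simpa using b_ne_zero), ← map_mul, mul_comm, ← smul_eq_mul, ← map_smul, mul_c,
    p_algebraMap]

end Retraction

section MonoidAlgebra

open scoped AddMonoidAlgebra

theorem comapDomain_mapDomain_mul {R M N : Type*} [Semiring R] [AddMonoid M] [AddMonoid N]
    (φ : M →+ N) (hφ : Function.Injective φ)
    (hrange : ∀ m d, φ m + d ∈ Set.range φ → d ∈ Set.range φ) (x : R[M]) (y : R[N]) :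
    AddMonoidAlgebra.comapDomain φ hφ (AddMonoidAlgebra.mapDomain φ x * y) =
      x * AddMonoidAlgebra.comapDomain φ hφ y := by
  induction x using AddMonoidAlgebra.induction_linear with
  | zero => simp
  | add x₁ x₂ h₁ h₂ =>
    simp only [AddMonoidAlgebra.mapDomain_add, add_mul, AddMonoidAlgebra.comapDomain_add, h₁, h₂]
  | single m r =>
    induction y using AddMonoidAlgebra.induction_linear with
    | zero => simp
    | add y₁ y₂ h₁ h₂ => simp only [mul_add, AddMonoidAlgebra.comapDomain_add, h₁, h₂]
    | single d s =>
      have comapDomain_single_eq_zero {n : N} (hn : n ∉ Set.range φ) (t : R) :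
          AddMonoidAlgebra.comapDomain φ hφ (AddMonoidAlgebra.single n t) = 0 := by
        ext k
        have hnk : n ≠ φ k := fun h ↦ hn ⟨k, h.symm⟩
        simp [hnk]
      rw [AddMonoidAlgebra.mapDomain_single, AddMonoidAlgebra.single_mul_single]
      by_cases hd : d ∈ Set.range φ
      · obtain ⟨n, rfl⟩ := hd
        simp only [← map_add, AddMonoidAlgebra.comapDomain_single_map,
          AddMonoidAlgebra.single_mul_single]
      · rw [comapDomain_single_eq_zero hd, comapDomain_single_eq_zero fun h ↦ hd (hrange m d h),
          mul_zero]

theorem isIntegrallyClosed_addMonoidAlgebra_of_add_mem_range {R M N : Type*} [CommRing R]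
    [AddCommMonoid M] [AddCommMonoid N] [IsDomain R[N]] [IsIntegrallyClosed R[N]]
    (φ : M →+ N) (hφ : Function.Injective φ)
    (hrange : ∀ m d, φ m + d ∈ Set.range φ → d ∈ Set.range φ) : IsIntegrallyClosed R[M] := by
  let _ : Algebra R[M] R[N] := (AddMonoidAlgebra.mapDomainRingHom R φ).toAlgebra
  let p : R[N] →ₗ[R[M]] R[M] :=
    { AddMonoidAlgebra.comapDomainAddMonoidHom φ hφ with
      map_smul' := comapDomain_mapDomain_mul φ hφ hrange }
  refine isIntegrallyClosed_of_retraction p ?_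
  change AddMonoidAlgebra.comapDomain φ hφ (AddMonoidAlgebra.single 0 1) = 1
  rw [← map_zero φ, AddMonoidAlgebra.comapDomain_single_map, AddMonoidAlgebra.one_def]

theorem of'_dvd_of'_iff {R M : Type*} [Semiring R] [Nontrivial R] [AddMonoid M] {a b : M} :
    AddMonoidAlgebra.of' R M a ∣ AddMonoidAlgebra.of' R M b ↔ ∃ d, b = a + d := by
  constructor
  · rintro ⟨x, hx⟩
    by_contra! hab
    have coeff_eq_zero : (AddMonoidAlgebra.of' R M b).coeff b = 0 := by
      rw [hx]
      exact AddMonoidAlgebra.coeff_single_mul_of_forall_add_ne _ _ fun d ↦ (hab d).symm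
    simp at coeff_eq_zero
  · rintro ⟨d, rfl⟩
    exact ⟨AddMonoidAlgebra.of' R M d, by simp [AddMonoidAlgebra.single_mul_single]⟩

instance {G : Type*} [AddMonoid G] [UniqueSums G] (M : AddSubmonoid G) : UniqueSums M :=
  UniqueSums.of_injective_addHom M.subtype.toAddHom Subtype.val_injective inferInstance

variable {G : Type*} [AddCommGroup G] {M : AddSubmonoid G}

section NatCoords

variable {ι : Type*} [Finite ι]

/-- The homomorphism `M →+ (ι →₀ ℕ)` given by integer-valued functionals on `G` that are
nonnegative on `M`; it embeds `M` in the exponents of a polynomial ring. -/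
def natCoords (ℓ : G →+ ι → ℤ) (hℓ : ∀ x ∈ M, 0 ≤ ℓ x) : M →+ (ι →₀ ℕ) where
  toFun x := Finsupp.equivFunOnFinite.symm fun i ↦ (ℓ x i).toNat
  map_zero' := by ext; simp
  map_add' x y := by ext i; simp [Int.toNat_add (hℓ x x.2 i) (hℓ y y.2 i)]

theorem natCast_natCoords (ℓ : G →+ ι → ℤ) (hℓ : ∀ x ∈ M, 0 ≤ ℓ x) (x : M) (i : ι) :
    (natCoords ℓ hℓ x i : ℤ) = ℓ x i :=
  Int.toNat_of_nonneg (hℓ x x.2 i)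

theorem natCoords_injective {ℓ : G →+ ι → ℤ} (hℓ : ∀ x ∈ M, 0 ≤ ℓ x)
    (hinj : Function.Injective ℓ) : Function.Injective (natCoords ℓ hℓ) := by
  intro x y hxy
  refine Subtype.ext (hinj (funext fun i ↦ ?_))
  rw [← natCast_natCoords ℓ hℓ, ← natCast_natCoords ℓ hℓ, hxy]

theorem isIntegrallyClosed_addMonoidAlgebra_of_mem_iff_nonneg {R : Type*} [CommRing R]
    [IsDomain R] [UniqueFactorizationMonoid R] (ℓ : G →+ ι → ℤ) (hinj : Function.Injective ℓ)
    (hM : ∀ x, x ∈ M ↔ 0 ≤ ℓ x) : IsIntegrallyClosed R[M] := by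
  have hℓ (x) (hx : x ∈ M) : 0 ≤ ℓ x := (hM x).1 hx
  have : IsIntegrallyClosed R[ι →₀ ℕ] := inferInstanceAs (IsIntegrallyClosed (MvPolynomial ι R))
  have : IsDomain R[ι →₀ ℕ] := inferInstanceAs (IsDomain (MvPolynomial ι R))
  refine isIntegrallyClosed_addMonoidAlgebra_of_add_mem_range (natCoords ℓ hℓ)
    (natCoords_injective hℓ hinj) ?_
  rintro m d ⟨n, hn⟩
  have ℓ_sub (i) : ℓ (n - m) i = d i := by
    rw [map_sub, Pi.sub_apply, ← natCast_natCoords ℓ hℓ, ← natCast_natCoords ℓ hℓ, hn]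
    simp
  refine ⟨⟨n - m, (hM _).2 fun i ↦ ?_⟩, Finsupp.ext fun i ↦ ?_⟩
  · simp [ℓ_sub]
  · rw [← Nat.cast_inj (R := ℤ), natCast_natCoords, ℓ_sub]

end NatCoords

theorem sub_mem_of_nsmul_sub_mem_of_isIntegrallyClosed (R : Type*) [CommRing R] [IsDomain R[M]]
    [IsIntegrallyClosed R[M]] {a b : G} (ha : a ∈ M) (hb : b ∈ M) {n : ℕ} (hn : n ≠ 0)
    (hab : n • (b - a) ∈ M) : b - a ∈ M := by
  lift a to M using ha
  lift b to M using hb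
  have : Nontrivial R := Module.nontrivial R R[M]
  have pow_dvd_pow : AddMonoidAlgebra.of' R M a ^ n ∣ AddMonoidAlgebra.of' R M b ^ n := by
    simp only [AddMonoidAlgebra.of'_apply, AddMonoidAlgebra.single_pow, one_pow]
    exact of'_dvd_of'_iff.2 ⟨⟨_, hab⟩, Subtype.ext <| by simp [smul_sub]⟩
  obtain ⟨d, rfl⟩ := of'_dvd_of'_iff.1 ((IsIntegrallyClosed.pow_dvd_pow_iff hn).1 pow_dvd_pow)
  simp

end MonoidAlgebra

section Circuit

variable {ι κ : Type*}

theorem exists_nonneg_shift [Finite ι] [Nonempty ι] {c : ℤ} {a : ι → ℤ} {b : κ → ℤ}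
    (h : ∀ i j, 0 ≤ c * a i + b j) : ∃ t, (∀ i, 0 ≤ a i + t) ∧ ∀ j, 0 ≤ b j - c * t := by
  obtain ⟨i₀, hi₀⟩ := Finite.exists_min a
  refine ⟨-a i₀, fun i ↦ ?_, fun j ↦ ?_⟩
  · linarith [hi₀ i]
  · linarith [h i₀ j]

theorem sum_zsmul_mem_closure_of_circuit {G : Type*} [AddCommGroup G] [Fintype ι] [Nonempty ι]
    [Fintype κ] {u : ι → G} {w : κ → G} {c : ℤ} (hc : ∑ i, u i = c • ∑ j, w j)
    {a : ι → ℤ} {b : κ → ℤ} (h : ∀ i j, 0 ≤ c * a i + b j) :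
    ∑ i, a i • u i + ∑ j, b j • w j ∈ AddSubmonoid.closure (Set.range u ∪ Set.range w) := by
  obtain ⟨t, ha, hb⟩ := exists_nonneg_shift h
  have zsmul_mem {n : ℤ} (hn : 0 ≤ n) {g : G} (hg : g ∈ Set.range u ∪ Set.range w) :
      n • g ∈ AddSubmonoid.closure (Set.range u ∪ Set.range w) := by
    lift n to ℕ using hn
    simpa using nsmul_mem (AddSubmonoid.subset_closure hg) n
  have shift : ∑ i, a i • u i + ∑ j, b j • w j =
      ∑ i, (a i + t) • u i + ∑ j, (b j - c * t) • w j := by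
    simp only [add_smul, sub_smul, mul_smul, Finset.sum_add_distrib, Finset.sum_sub_distrib,
      ← Finset.smul_sum, hc, smul_comm c t]
    abel
  rw [shift]
  exact add_mem (sum_mem fun i _ ↦ zsmul_mem (ha i) (.inl ⟨i, rfl⟩))
    (sum_mem fun j _ ↦ zsmul_mem (hb j) (.inr ⟨j, rfl⟩))

end Circuit

section Q2

/-- Four vertices of `Q2`, lifted to height one, spanning a tetrahedron whose barycenter is the
midpoint of the other two, see `sum_tetrahedron`. -/
def tetrahedron : Fin 4 → (Fin 4 → ℤ) × ℤ :=
  ![(![1,0,0,0], 1), (![0,1,0,1], 1), (![0,0,1,1], 1), (![1,1,1,0], 1)]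

/-- The remaining two vertices of `Q2`, lifted to height one. -/
def segmentEnds : Fin 2 → (Fin 4 → ℤ) × ℤ :=
  ![(![1,1,1,1], 1), (![0,0,0,0], 1)]

/-- Coefficients of a lattice point along `tetrahedron`, to be used together with `segmentCoeff`.
Such coefficients are unique up to multiples of the relation `sum_tetrahedron`; they are normalized
by letting the coefficient of the last vertex vanish. -/
def tetrahedronCoeff (x : (Fin 4 → ℤ) × ℤ) : Fin 4 → ℤ :=
  let f := x.1 1 + x.1 2 - x.1 3
  ![x.1 0 - f, x.1 1 - f, x.1 2 - f, 0]

/-- Coefficients of a lattice point along `segmentEnds`, matching the normalization of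
`tetrahedronCoeff`. -/
def segmentCoeff (x : (Fin 4 → ℤ) × ℤ) : Fin 2 → ℤ :=
  let f := x.1 1 + x.1 2 - x.1 3
  ![f, x.2 - x.1 0 - x.1 1 - x.1 2 + 2 * f]

theorem latticeA_V2_eq :
    latticeA V2 = Set.range tetrahedron ∪ Set.range segmentEnds := by
  simp only [latticeA, V2, tetrahedron, segmentEnds, Set.image_insert_eq, Set.image_singleton,
    Matrix.range_cons, Matrix.range_empty, Set.union_empty, Set.singleton_union, Set.insert_union]
  ext
  simp only [Set.mem_insert_iff, Set.mem_singleton_iff]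
  tauto

theorem sum_tetrahedron : ∑ i, tetrahedron i = (2 : ℤ) • ∑ j, segmentEnds j := by
  decide

theorem sum_coeff_zsmul_add_sum_coeff_zsmul (x : (Fin 4 → ℤ) × ℤ) :
    ∑ i, tetrahedronCoeff x i • tetrahedron i + ∑ j, segmentCoeff x j • segmentEnds j = x := by
  ext i
  · fin_cases i <;>
      simp [Fin.sum_univ_succ, tetrahedronCoeff, segmentCoeff, tetrahedron, segmentEnds]
    ring
  · simp [Fin.sum_univ_succ, tetrahedronCoeff, segmentCoeff, tetrahedron, segmentEnds]
    ring

/-- The eight linear forms defining the facets of the cone over `Q2`. The combinations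
`2 aᵢ + bⱼ` of coefficients are invariant under adding multiples of the relation
`sum_tetrahedron`, hence independent of the normalization. -/
def facetForms : (Fin 4 → ℤ) × ℤ →+ (Fin 4 × Fin 2 → ℤ) :=
  AddMonoidHom.mk' (fun x ij ↦ 2 * tetrahedronCoeff x ij.1 + segmentCoeff x ij.2) fun x y ↦ by
    ext ⟨i, j⟩
    fin_cases i <;> fin_cases j <;>
      (simp [tetrahedronCoeff, segmentCoeff]; ring)

theorem facetForms_injective : Function.Injective facetForms := by
  refine (injective_iff_map_eq_zero _).2 fun x hx ↦ ?_
  have facet_eq_zero (i j) : 2 * tetrahedronCoeff x i + segmentCoeff x j = 0 := congrFun hx (i, j)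
  have inner_eq_zero (j) : segmentCoeff x j = 0 := by
    simpa [tetrahedronCoeff] using facet_eq_zero 3 j
  have outer_eq_zero (i) : tetrahedronCoeff x i = 0 := by
    simpa [inner_eq_zero] using facet_eq_zero i 0
  simpa [inner_eq_zero, outer_eq_zero] using (sum_coeff_zsmul_add_sum_coeff_zsmul x).symm

theorem mem_closure_latticeA_V2_iff (x : (Fin 4 → ℤ) × ℤ) :
    x ∈ AddSubmonoid.closure (latticeA V2) ↔ 0 ≤ facetForms x := by
  constructor
  · suffices AddSubmonoid.closure (latticeA V2) ≤ (AddSubmonoid.nonneg _).comap facetForms from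
      fun hx ↦ this hx
    rw [AddSubmonoid.closure_le, latticeA_V2_eq, Set.union_subset_iff,
      Set.range_subset_iff, Set.range_subset_iff]
    have tetrahedron_nonneg : ∀ m i j, 0 ≤ facetForms (tetrahedron m) (i, j) := by decide
    have segmentEnds_nonneg : ∀ m i j, 0 ≤ facetForms (segmentEnds m) (i, j) := by decide
    exact ⟨fun m ij ↦ tetrahedron_nonneg m ij.1 ij.2, fun m ij ↦ segmentEnds_nonneg m ij.1 ij.2⟩
  · intro hx
    rw [← sum_coeff_zsmul_add_sum_coeff_zsmul x, latticeA_V2_eq]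
    exact sum_zsmul_mem_closure_of_circuit sum_tetrahedron fun i j ↦ hx (i, j)

theorem isIntegrallyClosed_toricRing_V2 (𝕜 : Type*) [Field 𝕜] :
    IsIntegrallyClosed (toricRing 𝕜 V2) :=
  isIntegrallyClosed_addMonoidAlgebra_of_mem_iff_nonneg facetForms facetForms_injective
    mem_closure_latticeA_V2_iff

end Q2

section Q1

theorem nonneg_and_even_of_mem_closure_latticeA_V1 {x : (Fin 4 → ℤ) × ℤ}
    (hx : x ∈ AddSubmonoid.closure (latticeA V1)) :
    0 ≤ x.1 3 ∧ (x.1 3 = 0 → Even (x.1 0 + x.1 1 + x.1 2)) := by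
  induction hx using AddSubmonoid.closure_induction with
  | mem x hx =>
    obtain ⟨v, hv, rfl⟩ := hx
    rcases hv with rfl | rfl | rfl | rfl | rfl | rfl <;> decide
  | zero => simp
  | add x y _ _ hx hy =>
    simp only [Prod.fst_add, Pi.add_apply]
    grind

theorem not_isIntegrallyClosed_toricRing_V1 (𝕜 : Type*) [Field 𝕜] :
    ¬ IsIntegrallyClosed (toricRing 𝕜 V1) := by
  intro _
  have : IsDomain (toricRing 𝕜 V1) := NoZeroDivisors.to_isDomain _
  have vertex_mem {v : Fin 4 → ℤ} (hv : v ∈ V1) : (v, 1) ∈ AddSubmonoid.closure (latticeA V1) :=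
    AddSubmonoid.subset_closure ⟨v, hv, rfl⟩
  have v₀_mem := vertex_mem (v := ![0,0,0,0]) (by simp [V1])
  have v₁_mem := vertex_mem (v := ![1,1,0,0]) (by simp [V1])
  have v₂_mem := vertex_mem (v := ![1,0,1,0]) (by simp [V1])
  have v₃_mem := vertex_mem (v := ![0,1,1,0]) (by simp [V1])
  have v₄_mem := vertex_mem (v := ![0,0,0,1]) (by simp [V1])
  have v₅_mem := vertex_mem (v := ![1,1,1,1]) (by simp [V1])
  let hole : (Fin 4 → ℤ) × ℤ := (![1,1,1,0], 2)
  have hole_eq : hole = 2 • (![0,0,0,0], 1) + (![1,1,1,1], 1) - (![0,0,0,1], 1) := by decide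
  have two_nsmul_hole : 2 • hole =
      (![0,0,0,0], 1) + (![1,1,0,0], 1) + (![1,0,1,0], 1) + (![0,1,1,0], 1) := by decide
  have two_nsmul_hole_mem : 2 • hole ∈ AddSubmonoid.closure (latticeA V1) := by
    rw [two_nsmul_hole]
    exact add_mem (add_mem (add_mem v₀_mem v₁_mem) v₂_mem) v₃_mem
  have hole_mem : hole ∈ AddSubmonoid.closure (latticeA V1) := by
    rw [hole_eq] at two_nsmul_hole_mem ⊢
    exact sub_mem_of_nsmul_sub_mem_of_isIntegrallyClosed 𝕜 v₄_mem
      (add_mem (nsmul_mem v₀_mem 2) v₅_mem) two_ne_zero two_nsmul_hole_mem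
  have even_three : Even (3 : ℤ) := (nonneg_and_even_of_mem_closure_latticeA_V1 hole_mem).2 rfl
  exact absurd even_three (by decide)

end Q1

theorem stmt_15 (𝕜 : Type*) [Field 𝕜] :
    IsIntegrallyClosed (toricRing 𝕜 V2) ∧
      ¬ IsIntegrallyClosed (toricRing 𝕜 V1) ∧
      IsEmpty (toricRing 𝕜 V1 ≃ₐ[𝕜] toricRing 𝕜 V2) := by
  have normal := isIntegrallyClosed_toricRing_V2 𝕜
  have not_normal := not_isIntegrallyClosed_toricRing_V1 𝕜
  exact ⟨normal, not_normal, ⟨fun e ↦ not_normal (.of_equiv e.symm.toRingEquiv)⟩⟩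

end
end
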